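/- Fix t > 0. The function K ↦ log(η_K(t) + 1) is convex on (0, ∞), and the function K ↦ log(η_K(t)) is concave on (0, ∞). In particular, for all K, L > 0 with K ≠ L and all p, q ∈ (0,1) with p + q = 1, one has η_K(t)^p · η_L(t)^q < η_{pK+qL}(t) < (η_K(t) + 1)^p · (η_L(t) + 1)^q − 1. -/

import Mathlib

open Set Filter

/-- Complete elliptic integral of the first kind. -/
noncomputable def ellK (r : ℝ) : ℝ :=
  ∫ θ in (0:ℝ)..(Real.pi / 2), (1 - r ^ 2 * Real.sin θ ^ 2) ^ (-(1/2) : ℝ)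

/-- The Grötzsch modulus μ(r) = (π/2)·𝒦'(r)/𝒦(r). -/
noncomputable def mu (r : ℝ) : ℝ :=
  Real.pi / 2 * ellK (Real.sqrt (1 - r ^ 2)) / ellK r

lemma exp_lt_one_aux {x : ℝ} (h : x < 0) : Real.exp x < 1 := by
  rw [← Real.exp_zero]; exact Real.exp_lt_exp.2 h

/-- Auxiliary family of integrals. -/
noncomputable def JJ (n : ℕ) (a x : ℝ) : ℝ :=
  ∫ θ in (0:ℝ)..(Real.pi / 2), Real.sin θ ^ n * (1 - x * Real.sin θ ^ 2) ^ a

lemma delta_pos {x : ℝ} (h0 : 0 < x) (h1 : x < 1) (θ : ℝ) : 0 < 1 - x * Real.sin θ ^ 2 := by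
  nlinarith [Real.sin_sq_le_one θ, sq_nonneg (Real.sin θ)]

lemma JJ_cont (n : ℕ) (a : ℝ) {x : ℝ} (h0 : 0 < x) (h1 : x < 1) :
    Continuous (fun θ : ℝ => Real.sin θ ^ n * (1 - x * Real.sin θ ^ 2) ^ a) := by
  refine (Real.continuous_sin.pow n).mul ?_
  refine Continuous.rpow_const (by fun_prop) ?_
  intro θ; left; exact (delta_pos h0 h1 θ).ne'

lemma JJ_deriv (n : ℕ) (a : ℝ) (ha : a ≤ 1) {x : ℝ} (h0 : 0 < x) (h1 : x < 1) :
    HasDerivAt (JJ n a) (-a * JJ (n+2) (a-1) x) x := by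
  have hs : Set.Ioo 0 ((1+x)/2) ∈ nhds x := Ioo_mem_nhds h0 (by linarith)
  have key := (intervalIntegral.hasDerivAt_integral_of_dominated_loc_of_deriv_le
    (μ := MeasureTheory.volume) (a := 0) (b := Real.pi/2)
    (F := fun x θ => Real.sin θ ^ n * (1 - x * Real.sin θ ^ 2) ^ a)
    (F' := fun x θ => -a * (Real.sin θ ^ (n+2) * (1 - x * Real.sin θ ^ 2) ^ (a-1)))
    (bound := fun _ => |a| * (1 - (1+x)/2) ^ (a-1)) (x₀ := x) hs ?_ ?_ ?_ ?_ ?_ ?_).2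
  · have : -a * JJ (n+2) (a-1) x = ∫ θ in (0:ℝ)..(Real.pi / 2),
      -a * (Real.sin θ ^ (n+2) * (1 - x * Real.sin θ ^ 2) ^ (a-1)) := by
      rw [intervalIntegral.integral_const_mul]; rfl
    rw [this]; exact key
  · filter_upwards [hs] with y hy
    exact (JJ_cont n a hy.1 (by linarith [hy.2])).aestronglyMeasurable
  · exact (JJ_cont n a h0 h1).intervalIntegrable _ _
  · exact ((JJ_cont (n+2) (a-1) h0 h1).const_smul (-a)).aestronglyMeasurable
  · refine Filter.Eventually.of_forall fun θ _ y hy => ?_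
    have hd := delta_pos hy.1 (by linarith [hy.2]) θ
    rw [Real.norm_eq_abs, abs_mul, abs_neg, abs_mul, abs_pow]
    have e1 : |Real.sin θ| ^ (n+2) ≤ 1 := pow_le_one₀ (abs_nonneg _) (Real.abs_sin_le_one θ)
    have e2 : |(1 - y * Real.sin θ ^ 2) ^ (a-1)| ≤ (1 - (1+x)/2) ^ (a-1) := by
      rw [abs_of_pos (Real.rpow_pos_of_pos hd _)]
      refine Real.rpow_le_rpow_of_nonpos (by linarith) ?_ (by linarith)
      nlinarith [Real.sin_sq_le_one θ, sq_nonneg (Real.sin θ), hy.1, hy.2]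
    refine mul_le_mul_of_nonneg_left ?_ (abs_nonneg a)
    calc _ ≤ 1 * (1 - (1+x)/2) ^ (a-1) := mul_le_mul e1 e2 (abs_nonneg _) zero_le_one
      _ = _ := one_mul _
  · exact intervalIntegrable_const
  · refine Filter.Eventually.of_forall fun θ _ y hy => ?_
    have hd := delta_pos hy.1 (by linarith [hy.2]) θ
    have h : HasDerivAt (fun y : ℝ => 1 - y * Real.sin θ ^ 2) (-(1 * Real.sin θ ^ 2)) y :=
      ((hasDerivAt_id y).mul_const _).const_sub 1
    have h2 := (h.rpow_const (p := a) (Or.inl hd.ne')).const_mul (Real.sin θ ^ n)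
    refine HasDerivAt.congr_deriv h2 ?_
    ring

/-- The elliptic integral in the variable `x = r ^ 2`. -/
noncomputable def FF (x : ℝ) : ℝ := JJ 0 (-(1/2)) x
/-- Its derivative. -/
noncomputable def FD (x : ℝ) : ℝ := 1/2 * JJ 2 (-(3/2)) x

lemma ellK_eq (r : ℝ) : ellK r = FF (r ^ 2) := by
  simp [ellK, FF, JJ]

lemma FF_deriv {x : ℝ} (h0 : 0 < x) (h1 : x < 1) : HasDerivAt FF (FD x) x := by
  have := JJ_deriv 0 (-(1/2)) (by norm_num) h0 h1
  refine HasDerivAt.congr_deriv this ?_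
  rw [FD]; norm_num

lemma FD_deriv {x : ℝ} (h0 : 0 < x) (h1 : x < 1) :
    HasDerivAt FD (3/4 * JJ 4 (-(5/2)) x) x := by
  have := (JJ_deriv 2 (-(3/2)) (by norm_num) h0 h1).const_mul (1/2)
  refine HasDerivAt.congr_deriv this ?_
  norm_num; ring

lemma JJ_pos (n : ℕ) (a : ℝ) {x : ℝ} (h0 : 0 < x) (h1 : x < 1) : 0 < JJ n a x := by
  refine intervalIntegral.intervalIntegral_pos_of_pos_on
    ((JJ_cont n a h0 h1).intervalIntegrable _ _) ?_ (by positivity)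
  intro θ hθ
  have := Real.sin_pos_of_pos_of_lt_pi hθ.1 (by linarith [hθ.2, Real.pi_pos])
  exact mul_pos (pow_pos this _) (Real.rpow_pos_of_pos (delta_pos h0 h1 θ) _)

lemma FF_pos {x : ℝ} (h0 : 0 < x) (h1 : x < 1) : 0 < FF x := JJ_pos _ _ h0 h1
lemma FD_pos {x : ℝ} (h0 : 0 < x) (h1 : x < 1) : 0 < FD x := by
  have := JJ_pos 2 (-(3/2)) h0 h1
  unfold FD; positivity

lemma FF_ode {x : ℝ} (h0 : 0 < x) (h1 : x < 1) :
    x * (1 - x) * (3/4 * JJ 4 (-(5/2)) x) + (1 - 2 * x) * FD x - FF x / 4 = 0 := by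
  have hI : ∀ (n : ℕ) (a : ℝ), IntervalIntegrable
      (fun θ : ℝ => Real.sin θ ^ n * (1 - x * Real.sin θ ^ 2) ^ a)
      MeasureTheory.volume 0 (Real.pi/2) :=
    fun n a => (JJ_cont n a h0 h1).intervalIntegrable _ _
  have hd : ∀ θ : ℝ, HasDerivAt
      (fun θ => -(1/4) * (Real.sin θ * Real.cos θ * (1 - x * Real.sin θ ^ 2) ^ (-(3/2) : ℝ)))
      (x * (1 - x) * (3/4) * (Real.sin θ ^ 4 * (1 - x * Real.sin θ ^ 2) ^ (-(5/2) : ℝ))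
        + (1 - 2 * x) * (1/2) * (Real.sin θ ^ 2 * (1 - x * Real.sin θ ^ 2) ^ (-(3/2) : ℝ))
        - 1/4 * (Real.sin θ ^ 0 * (1 - x * Real.sin θ ^ 2) ^ (-(1/2) : ℝ))) θ := by
    intro θ
    have hp := delta_pos h0 h1 θ
    have hΔ : HasDerivAt (fun θ : ℝ => 1 - x * Real.sin θ ^ 2)
        (-(x * (((2:ℕ):ℝ) * Real.sin θ ^ (2-1) * Real.cos θ))) θ :=
      (((Real.hasDerivAt_sin θ).pow 2).const_mul x).const_sub 1
    have h := (((Real.hasDerivAt_sin θ).mul (Real.hasDerivAt_cos θ)).mul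
      (hΔ.rpow_const (p := -(3/2)) (Or.inl hp.ne'))).const_mul (-(1/4))
    refine HasDerivAt.congr_deriv h ?_
    have e1 : (1 - x * Real.sin θ ^ 2) ^ (-(3/2) : ℝ) =
        (1 - x * Real.sin θ ^ 2) * (1 - x * Real.sin θ ^ 2) ^ (-(5/2) : ℝ) := by
      rw [← Real.rpow_one_add' hp.le (by norm_num)]; norm_num
    have e2 : (1 - x * Real.sin θ ^ 2) ^ (-(1/2) : ℝ) =
        (1 - x * Real.sin θ ^ 2) ^ 2 * (1 - x * Real.sin θ ^ 2) ^ (-(5/2) : ℝ) := by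
      rw [← Real.rpow_two (1 - x * Real.sin θ ^ 2), ← Real.rpow_add hp]; norm_num
    have e3 : (-(3/2) - 1 : ℝ) = -(5/2) := by norm_num
    rw [e3, e1, e2]
    have hc := Real.cos_sq' θ
    generalize (1 - x * Real.sin θ ^ 2) ^ (-(5/2) : ℝ) = D
    simp only [Pi.mul_apply]
    push_cast
    linear_combination (- D * (1/4) * (1 - x * Real.sin θ ^ 2)
      - D * (3/4) * x * Real.sin θ ^ 2) * hc
  have hint := intervalIntegral.integral_eq_sub_of_hasDerivAt (a := 0) (b := Real.pi/2)
    (fun θ _ => hd θ) ((((hI 4 _).const_mul _).add ((hI 2 _).const_mul _)).sub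
      ((hI 0 _).const_mul _))
  rw [intervalIntegral.integral_sub (((hI 4 _).const_mul _).add ((hI 2 _).const_mul _))
    ((hI 0 _).const_mul _), intervalIntegral.integral_add ((hI 4 _).const_mul _)
    ((hI 2 _).const_mul _)] at hint
  simp only [intervalIntegral.integral_const_mul] at hint
  simp only [Real.cos_pi_div_two, Real.sin_zero, mul_zero, zero_mul, sub_zero] at hint
  simp only [FD, FF, JJ]
  linarith

/-- The quotient. -/
noncomputable def MM (x : ℝ) : ℝ := FF (1 - x) / FF x

lemma wronsk : ∃ C : ℝ, 0 < C ∧ ∀ x, 0 < x → x < 1 →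
    x * (1 - x) * (FD (1 - x) * FF x + FF (1 - x) * FD x) = C := by
  set W : ℝ → ℝ := fun x => x * (1 - x) * (FD (1 - x) * FF x + FF (1 - x) * FD x) with hW
  have hd : ∀ x ∈ Set.Ioo (0:ℝ) 1, HasDerivAt W 0 x := by
    rintro x ⟨h0, h1⟩
    have g0 : 0 < 1 - x := by linarith
    have g1 : 1 - x < 1 := by linarith
    have hr : HasDerivAt (fun x : ℝ => 1 - x) (-1) x := by
      simpa using (hasDerivAt_id x).const_sub 1
    have a1 := FF_deriv h0 h1
    have a2 := FD_deriv h0 h1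
    have a3 := (FF_deriv g0 g1).comp x hr
    have a4 := (FD_deriv g0 g1).comp x hr
    have h := (((hasDerivAt_id x).mul hr)).mul ((a4.mul a1).add (a3.mul a2))
    have o1 := FF_ode h0 h1
    have o2 := FF_ode g0 g1
    refine HasDerivAt.congr_deriv h ?_
    simp only [Function.comp, Pi.mul_apply, Pi.add_apply, id]
    linear_combination FF (1-x) * o1 - FF x * o2
  refine ⟨W (1/2), ?_, ?_⟩
  · have p1 := FF_pos (x := 1/2) (by norm_num) (by norm_num)
    have p2 := FD_pos (x := 1/2) (by norm_num) (by norm_num)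
    have : (1:ℝ) - 1/2 = 1/2 := by norm_num
    simp only [hW, this]
    positivity
  · intro x h0 h1
    have := (convex_Ioo (0:ℝ) 1).is_const_of_fderivWithin_eq_zero (𝕜 := ℝ) (f := W)
      (fun y hy => (hd y hy).differentiableAt.differentiableWithinAt) (fun y hy => by
        rw [fderivWithin_of_isOpen isOpen_Ioo hy]
        ext; simp [(hd y hy).deriv]) (x := x) (y := 1/2) ⟨h0, h1⟩ ⟨by norm_num, by norm_num⟩
    exact this

lemma MM_deriv : ∃ C : ℝ, 0 < C ∧ ∀ x, 0 < x → x < 1 →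
    HasDerivAt MM (-C / (x * (1 - x) * FF x ^ 2)) x := by
  obtain ⟨C, hC, hw⟩ := wronsk
  refine ⟨C, hC, fun x h0 h1 => ?_⟩
  have g0 : 0 < 1 - x := by linarith
  have g1 : 1 - x < 1 := by linarith
  have hr : HasDerivAt (fun x : ℝ => 1 - x) (-1) x := by
    simpa using (hasDerivAt_id x).const_sub 1
  have hp := FF_pos h0 h1
  have h := ((FF_deriv g0 g1).comp x hr).div (FF_deriv h0 h1) hp.ne'
  refine HasDerivAt.congr_deriv h ?_
  rw [← hw x h0 h1]
  simp only [Function.comp]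
  field_simp
  ring

lemma MM_pos {x : ℝ} (h0 : 0 < x) (h1 : x < 1) : 0 < MM x :=
  div_pos (FF_pos (by linarith) (by linarith)) (FF_pos h0 h1)

lemma MM_symm {x : ℝ} : MM (1 - x) = (MM x)⁻¹ := by
  simp [MM]

lemma FF_mono {x y : ℝ} (h0 : 0 < x) (hxy : x < y) (h1 : y < 1) : FF x < FF y := by
  have : StrictMonoOn FF (Set.Ioo 0 1) := by
    refine strictMonoOn_of_deriv_pos (convex_Ioo 0 1)
      (fun z hz => (FF_deriv hz.1 hz.2).continuousAt.continuousWithinAt) ?_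
    intro z hz
    rw [interior_Ioo] at hz
    rw [(FF_deriv hz.1 hz.2).deriv]; exact FD_pos hz.1 hz.2
  exact this ⟨h0, by linarith⟩ ⟨by linarith, h1⟩ hxy

lemma FD_lt {x : ℝ} (h0 : 0 < x) (h1 : x < 1) : 2 * (1 - x) * FD x < FF x := by
  have : 0 < ∫ θ in (0:ℝ)..(Real.pi / 2),
      (Real.sin θ ^ 0 * (1 - x * Real.sin θ ^ 2) ^ (-(1/2) : ℝ) -
      (1 - x) * (Real.sin θ ^ 2 * (1 - x * Real.sin θ ^ 2) ^ (-(3/2) : ℝ))) := by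
    refine intervalIntegral.intervalIntegral_pos_of_pos_on
      (((JJ_cont 0 _ h0 h1).intervalIntegrable _ _).sub
        (((JJ_cont 2 _ h0 h1).intervalIntegrable _ _).const_mul _)) ?_ (by positivity)
    intro θ hθ
    have hp := delta_pos h0 h1 θ
    have hc := Real.cos_pos_of_mem_Ioo ⟨by linarith [hθ.1, Real.pi_pos], hθ.2⟩
    have e1 : (1 - x * Real.sin θ ^ 2) ^ (-(1/2) : ℝ) =
        (1 - x * Real.sin θ ^ 2) * (1 - x * Real.sin θ ^ 2) ^ (-(3/2) : ℝ) := by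
      rw [← Real.rpow_one_add' hp.le (by norm_num)]; norm_num
    have hD := Real.rpow_pos_of_pos hp (-(3/2))
    rw [e1]
    have e2 := Real.sin_sq_add_cos_sq θ
    have : Real.sin θ ^ 0 * ((1 - x * Real.sin θ ^ 2) * (1 - x * Real.sin θ ^ 2) ^ (-(3/2) : ℝ)) -
      (1 - x) * (Real.sin θ ^ 2 * (1 - x * Real.sin θ ^ 2) ^ (-(3/2) : ℝ))
      = Real.cos θ ^ 2 * (1 - x * Real.sin θ ^ 2) ^ (-(3/2) : ℝ) := by
      linear_combination (-(1 - x * Real.sin θ ^ 2) ^ (-(3/2) : ℝ)) * e2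
    rw [this]; positivity
  rw [intervalIntegral.integral_sub ((JJ_cont 0 _ h0 h1).intervalIntegrable _ _)
        (((JJ_cont 2 _ h0 h1).intervalIntegrable _ _).const_mul _),
        intervalIntegral.integral_const_mul] at this
  simp only [FD, FF, JJ]
  linarith

lemma GG_anti {x y : ℝ} (h0 : 0 < x) (hxy : x < y) (h1 : y < 1) :
    (1 - y) * FF y ^ 2 < (1 - x) * FF x ^ 2 := by
  have hd : ∀ z, 0 < z → z < 1 → HasDerivAt (fun z => (1 - z) * FF z ^ 2)
      (FF z * (2 * (1 - z) * FD z - FF z)) z := by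
    intro z h0 h1
    have hr : HasDerivAt (fun x : ℝ => 1 - x) (-1) z := by
      simpa using (hasDerivAt_id z).const_sub 1
    have h := hr.mul ((FF_deriv h0 h1).pow 2)
    refine HasDerivAt.congr_deriv h ?_
    simp
    ring
  have : StrictAntiOn (fun z => (1 - z) * FF z ^ 2) (Set.Ioo 0 1) := by
    refine strictAntiOn_of_deriv_neg (convex_Ioo 0 1)
      (fun z hz => (hd z hz.1 hz.2).continuousAt.continuousWithinAt) ?_
    intro z hz
    rw [interior_Ioo] at hz
    rw [(hd z hz.1 hz.2).deriv]
    exact mul_neg_of_pos_of_neg (FF_pos hz.1 hz.2) (by linarith [FD_lt hz.1 hz.2])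
  exact this ⟨h0, by linarith⟩ ⟨by linarith, h1⟩ hxy

lemma MM_anti : StrictAntiOn MM (Set.Ioo 0 1) := by
  obtain ⟨C, hC, hd⟩ := MM_deriv
  refine strictAntiOn_of_deriv_neg (convex_Ioo 0 1)
      (fun z hz => (hd z hz.1 hz.2).continuousAt.continuousWithinAt) ?_
  intro z hz
  rw [interior_Ioo] at hz
  rw [(hd z hz.1 hz.2).deriv]
  have := FF_pos hz.1 hz.2
  have : 0 < 1 - z := by linarith [hz.2]
  have := hz.1
  rw [neg_div]
  have : 0 < C / (z * (1 - z) * FF z ^ 2) := by positivity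
  linarith

lemma MM_surj1 {y : ℝ} (hy : 1 ≤ y) : ∃ x, 0 < x ∧ x < 1 ∧ MM x = y := by
  obtain ⟨C, hC, hd⟩ := MM_deriv
  set B := C / FF (1/2) ^ 2 with hB
  have hF := FF_pos (x := 1/2) (by norm_num) (by norm_num)
  have hBp : 0 < B := by positivity
  have hhalf : MM (1/2) = 1 := by
    have : (1:ℝ) - 1/2 = 1/2 := by norm_num
    rw [MM, this, div_self hF.ne']
  have hanti : AntitoneOn (fun x => MM x + B * Real.log x) (Set.Ioc 0 (1/2)) := by
    have hdd : ∀ z, 0 < z → z < 1 → HasDerivAt (fun x => MM x + B * Real.log x)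
      (-C / (z * (1 - z) * FF z ^ 2) + B * z⁻¹) z := fun z h0 h1 =>
        (hd z h0 h1).add ((Real.hasDerivAt_log h0.ne').const_mul B)
    refine antitoneOn_of_deriv_nonpos (convex_Ioc 0 (1/2))
      (fun z hz => (hdd z hz.1 (by linarith [hz.2])).continuousAt.continuousWithinAt) ?_ ?_
    · intro z hz
      rw [interior_Ioc] at hz
      exact (hdd z hz.1 (by linarith [hz.2])).differentiableAt.differentiableWithinAt
    · intro z hz
      rw [interior_Ioc] at hz
      have z0 := hz.1
      have z2 := hz.2
      rw [(hdd z hz.1 (by linarith [hz.2])).deriv]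
      have hz1 := FF_pos hz.1 (by linarith)
      have hlt := FF_mono hz.1 hz.2 (by norm_num)
      have : C / (z * FF (1/2)^2) ≤ C / (z * (1 - z) * FF z ^ 2) := by
        have h1z : 0 < 1 - z := by linarith
        refine div_le_div_of_nonneg_left hC.le (by positivity) ?_
        rw [mul_assoc]
        refine mul_le_mul_of_nonneg_left ?_ z0.le
        calc (1 - z) * FF z ^ 2 ≤ 1 * FF z ^ 2 := by
              refine mul_le_mul_of_nonneg_right (by linarith) (by positivity)
          _ = FF z ^ 2 := one_mul _
          _ ≤ _ := pow_le_pow_left₀ hz1.le hlt.le 2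
      have e : B * z⁻¹ = C / (z * FF (1/2)^2) := by
        rw [hB]; field_simp
      rw [e, neg_div]; linarith
  set x1 := 1/2 * Real.exp (-(y / B)) with hx1
  have hyB : 0 < y / B := by positivity
  have x1p : 0 < x1 := by positivity
  have x1l : x1 ≤ 1/2 := by
    have : Real.exp (-(y / B)) ≤ 1 := Real.exp_le_one_iff.2 (by linarith)
    rw [hx1]; linarith
  have h1 : y ≤ MM x1 := by
    have := hanti ⟨x1p, x1l⟩ ⟨by norm_num, le_refl _⟩ x1l
    simp only at this
    rw [hx1, Real.log_mul (by norm_num) (Real.exp_pos _).ne', Real.log_exp, ← hx1, hhalf] at this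
    have e : B * (y / B) = y := by field_simp
    linarith
  have := intermediate_value_Icc' x1l (f := MM) (fun z hz =>
    (hd z (by linarith [hz.1]) (by linarith [hz.2])).continuousAt.continuousWithinAt)
  obtain ⟨x, hx, hxy⟩ := this ⟨by rw [hhalf]; exact hy, h1⟩
  exact ⟨x, by linarith [hx.1], by linarith [hx.2], hxy⟩

lemma MM_surj {y : ℝ} (hy : 0 < y) : ∃ x, 0 < x ∧ x < 1 ∧ MM x = y := by
  rcases le_total 1 y with h | h
  · exact MM_surj1 h
  · obtain ⟨x, h0, h1, hx⟩ := MM_surj1 (one_le_inv₀ hy |>.2 h)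
    exact ⟨1 - x, by linarith, by linarith, by rw [MM_symm, hx, inv_inv]⟩

lemma conc : StrictConcaveOn ℝ (Set.Ioi 0) (fun w : ℝ => MM (Real.exp (-w))) := by
  obtain ⟨C, hC, hd⟩ := MM_deriv
  have hdd : ∀ w : ℝ, 0 < w → HasDerivAt (fun w : ℝ => MM (Real.exp (-w)))
      (C / ((1 - Real.exp (-w)) * FF (Real.exp (-w)) ^ 2)) w := by
    intro w hw
    have e0 := Real.exp_pos (-w)
    have e1 : Real.exp (-w) < 1 := exp_lt_one_aux (by linarith)
    have h := (hd _ e0 e1).comp w (hasDerivAt_neg w).exp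
    refine HasDerivAt.congr_deriv h ?_
    have := FF_pos e0 e1
    have : 1 - Real.exp (-w) ≠ 0 := by linarith
    field_simp
  refine StrictAntiOn.strictConcaveOn_of_deriv (convex_Ioi 0)
    (fun w hw => (hdd w hw).continuousAt.continuousWithinAt) ?_
  rw [interior_Ioi]
  intro v hv w hw hvw
  rw [(hdd v hv).deriv, (hdd w hw).deriv]
  have a1 := Real.exp_pos (-w)
  have a2 : Real.exp (-v) < 1 := exp_lt_one_aux (by simpa using hv)
  have a3 : Real.exp (-w) < Real.exp (-v) := Real.exp_lt_exp.2 (by linarith)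
  have := GG_anti a1 a3 a2
  have h3 := FF_pos (Real.exp_pos (-v)) a2
  have : 0 < 1 - Real.exp (-v) := by linarith
  exact div_lt_div_of_pos_left hC (by positivity) (by assumption)

lemma conv : StrictConvexOn ℝ Set.univ (fun v : ℝ => MM (1 + Real.exp v)⁻¹) := by
  obtain ⟨C, hC, hd⟩ := MM_deriv
  have b0 : ∀ v : ℝ, 0 < (1 + Real.exp v)⁻¹ := fun v => by positivity
  have b1 : ∀ v : ℝ, (1 + Real.exp v)⁻¹ < 1 := fun v =>
    inv_lt_one_of_one_lt₀ (by linarith [Real.exp_pos v])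
  have hdd : ∀ v : ℝ, HasDerivAt (fun v : ℝ => MM (1 + Real.exp v)⁻¹)
      (C / (FF (1 + Real.exp v)⁻¹ ^ 2)) v := by
    intro v
    have h := (hd _ (b0 v) (b1 v)).comp v (((Real.hasDerivAt_exp v).const_add 1).inv
      (by positivity))
    refine HasDerivAt.congr_deriv h ?_
    have := FF_pos (b0 v) (b1 v)
    have e : 1 - (1 + Real.exp v)⁻¹ = Real.exp v * (1 + Real.exp v)⁻¹ := by
      field_simp; ring
    rw [e]
    field_simp
  refine StrictMonoOn.strictConvexOn_of_deriv convex_univ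
    (fun w _ => (hdd w).continuousAt.continuousWithinAt) ?_
  rw [interior_univ]
  intro v _ w _ hvw
  rw [(hdd v).deriv, (hdd w).deriv]
  have a3 : (1 + Real.exp w)⁻¹ < (1 + Real.exp v)⁻¹ :=
    inv_strictAnti₀ (by positivity) (by linarith [Real.exp_lt_exp.2 hvw])
  have h1 := FF_mono (b0 w) a3 (b1 v)
  have h3 := FF_pos (b0 w) (b1 w)
  exact div_lt_div_of_pos_left hC (by positivity) (pow_lt_pow_left₀ h1 h3.le (by norm_num))

theorem stmt_14 (eta : ℝ → ℝ → ℝ)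
    (heta : ∀ K t : ℝ, 0 < K → 0 < t → ∀ u ∈ Set.Ioo (0:ℝ) 1,
      mu u = K * mu (1 / Real.sqrt (1 + t)) → eta K t = 1 / u ^ 2 - 1) (t : ℝ) (ht : 0 < t) :
    ConvexOn ℝ (Set.Ioi 0) (fun K : ℝ => Real.log (eta K t + 1)) ∧
    ConcaveOn ℝ (Set.Ioi 0) (fun K : ℝ => Real.log (eta K t)) ∧
    ∀ K L p q : ℝ, 0 < K → 0 < L → K ≠ L → p ∈ Set.Ioo (0:ℝ) 1 →
      q ∈ Set.Ioo (0:ℝ) 1 → p + q = 1 →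
      eta K t ^ p * eta L t ^ q < eta (p * K + q * L) t ∧
      eta (p * K + q * L) t < (eta K t + 1) ^ p * (eta L t + 1) ^ q - 1 := by
  have hmu : ∀ x : ℝ, 0 < x → x < 1 → mu (Real.sqrt x) = Real.pi / 2 * MM x := by
    intro x h0 h1
    rw [mu, ellK_eq, ellK_eq, Real.sq_sqrt (by rw [Real.sq_sqrt h0.le]; linarith),
      Real.sq_sqrt h0.le, MM, mul_div_assoc]
  have hx0 : 0 < (1 + t)⁻¹ := by positivity
  have hx1 : (1 + t)⁻¹ < 1 := inv_lt_one_of_one_lt₀ (by linarith)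
  set m := MM (1 + t)⁻¹ with hm
  have hmp : 0 < m := MM_pos hx0 hx1
  have main : ∀ K, 0 < K → ∃ x, 0 < x ∧ x < 1 ∧ MM x = K * m ∧ eta K t = x⁻¹ - 1 := by
    intro K hK
    obtain ⟨x, h0, h1, hx⟩ := MM_surj (mul_pos hK hmp)
    refine ⟨x, h0, h1, hx, ?_⟩
    have := heta K t hK ht (Real.sqrt x) ⟨Real.sqrt_pos.2 h0, by
      rw [Real.sqrt_lt' one_pos]; simpa using h1⟩ (by
      rw [hmu x h0 h1, one_div, ← Real.sqrt_inv, hmu _ hx0 hx1, hx]; ring)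
    rw [this, Real.sq_sqrt h0.le, one_div]
  have pos : ∀ K, 0 < K → 0 < eta K t := by
    intro K hK
    obtain ⟨x, h0, h1, hx, he⟩ := main K hK
    rw [he]; linarith [(one_lt_inv₀ h0).2 h1]
  have mainw : ∀ K, 0 < K → MM (Real.exp (-Real.log (eta K t + 1))) = K * m := by
    intro K hK
    obtain ⟨x, h0, h1, hx, he⟩ := main K hK
    rw [he, sub_add_cancel, Real.log_inv, neg_neg, Real.exp_log h0, hx]
  have mainv : ∀ K, 0 < K → MM (1 + Real.exp (Real.log (eta K t)))⁻¹ = K * m := by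
    intro K hK
    rw [Real.exp_log (pos K hK)]
    obtain ⟨x, h0, h1, hx, he⟩ := main K hK
    rw [he, add_sub_cancel, inv_inv, hx]
  have inj : ∀ K L, 0 < K → 0 < L → K ≠ L → eta K t ≠ eta L t := by
    intro K L hK hL hKL h
    have h1 := mainw K hK
    rw [h, mainw L hL] at h1
    exact hKL (mul_right_cancel₀ hmp.ne' h1).symm
  have C1 : StrictConvexOn ℝ (Set.Ioi 0) (fun K : ℝ => Real.log (eta K t + 1)) := by
    refine ⟨convex_Ioi 0, ?_⟩
    intro K hK L hL hKL p q hp hq hpq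
    have hN : 0 < p * K + q * L := by have : 0 < K := hK; have : 0 < L := hL; positivity
    have lp : ∀ K, 0 < K → 0 < Real.log (eta K t + 1) := fun K hK =>
      Real.log_pos (by linarith [pos K hK])
    have hne : Real.log (eta K t + 1) ≠ Real.log (eta L t + 1) := by
      intro h
      have := Real.log_injOn_pos (Set.mem_Ioi.2 (by linarith [pos K hK]))
        (Set.mem_Ioi.2 (by linarith [pos L hL])) h
      exact inj K L hK hL hKL (by linarith)
    have h := conc.2 (lp K hK) (lp L hL) hne hp hq hpq
    simp only [smul_eq_mul] at h ⊢
    rw [mainw K hK, mainw L hL, show p * (K * m) + q * (L * m) = (p * K + q * L) * m by ring,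
      ← mainw _ hN] at h
    have hw : 0 < p * Real.log (eta K t + 1) + q * Real.log (eta L t + 1) := by
      have := lp K hK; have := lp L hL; positivity
    have := (MM_anti.lt_iff_gt ⟨Real.exp_pos _, exp_lt_one_aux (by linarith [lp _ hN])⟩
      ⟨Real.exp_pos _, exp_lt_one_aux (by linarith)⟩).1 h
    linarith [Real.exp_lt_exp.1 this]
  have C2 : StrictConcaveOn ℝ (Set.Ioi 0) (fun K : ℝ => Real.log (eta K t)) := by
    refine ⟨convex_Ioi 0, ?_⟩
    intro K hK L hL hKL p q hp hq hpq
    have hN : 0 < p * K + q * L := by have : 0 < K := hK; have : 0 < L := hL; positivity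
    have hne : Real.log (eta K t) ≠ Real.log (eta L t) := by
      intro h
      exact inj K L hK hL hKL (Real.log_injOn_pos (pos K hK) (pos L hL) h)
    have h := conv.2 (Set.mem_univ _) (Set.mem_univ _) hne hp hq hpq
    simp only [smul_eq_mul] at h ⊢
    rw [mainv K hK, mainv L hL, show p * (K * m) + q * (L * m) = (p * K + q * L) * m by ring,
      ← mainv _ hN] at h
    have bb : ∀ v : ℝ, (1 + Real.exp v)⁻¹ ∈ Set.Ioo (0:ℝ) 1 := fun v =>
      ⟨by positivity, inv_lt_one_of_one_lt₀ (by linarith [Real.exp_pos v])⟩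
    have := (MM_anti.lt_iff_gt (bb _) (bb _)).1 h
    rw [inv_lt_inv₀ (by positivity) (by positivity)] at this
    exact Real.exp_lt_exp.1 (by linarith)
  refine ⟨C1.convexOn, C2.concaveOn, ?_⟩
  intro K L p q hK hL hKL hp hq hpq
  have hN : 0 < p * K + q * L := by have := hp.1; have := hq.1; positivity
  have h1 := C1.2 hK hL hKL hp.1 hq.1 hpq
  have h2 := C2.2 hK hL hKL hp.1 hq.1 hpq
  simp only [smul_eq_mul] at h1 h2
  have pK := pos K hK
  have pL := pos L hL
  have pN := pos _ hN
  have ex : ∀ a b : ℝ, 0 < a → 0 < b → a ^ p * b ^ q =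
      Real.exp (p * Real.log a + q * Real.log b) := by
    intro a b ha hb
    rw [Real.rpow_def_of_pos ha, Real.rpow_def_of_pos hb, ← Real.exp_add]
    ring_nf
  constructor
  · rw [ex _ _ pK pL]
    exact (Real.lt_log_iff_exp_lt pN).1 h2
  · rw [ex _ _ (by linarith) (by linarith)]
    have := (Real.log_lt_iff_lt_exp (by linarith)).1 h1
    linarith
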